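/- arXiv:2205.14987 — 5 statements merged into one kernel-verified Lean document; each statement's English description precedes it below -/
import Mathlib

section
/- Let S be a finite state space, let R : S × S → ℝ be a rate matrix (i.e. every row sums to zero: for all x, ∑_{x̃} R(x, x̃) = 0), and let q : S → ℝ be strictly positive. Define the reverse rate matrix R̂ : S × S → ℝ by R̂(x, x̃) = R(x̃, x) · q(x̃) / q(x) for x̃ ≠ x and R̂(x, x) = −∑_{x̃ ≠ x} R̂(x, x̃). Then for every state x, ∑_{x̃ ∈ S} q(x̃) · (R(x̃, x) + R̂(x̃, x)) = 0; that is, q is an invariant (stationary) distribution for the corrector rate matrix R + R̂. -/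
/-! The corrector `R + Rhat` is reversible with respect to `q`: off the diagonal,
`q y * Rhat y x = q x * R x y` and `q y * R y x = q x * Rhat x y`, so detailed balance holds. Hence
the column sum weighted by `q` is `q x` times a row sum of `R + Rhat`, which vanishes. -/

/-- If `R` is a rate matrix (rows summing to zero) on a finite state space `S`,
`q` is strictly positive, and `Rhat` is the reverse rate matrix defined by
`Rhat(x, y) = R(y, x) · q(y) / q(x)` for `y ≠ x` and `Rhat(x, x) = -∑_{y ≠ x} Rhat(x, y)`,
then `q` is invariant (stationary) for the corrector rate matrix `R + Rhat`. -/
theorem corrector_rate_stationary {S : Type*} [Fintype S] [DecidableEq S]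
    (R : S → S → ℝ) (hR : ∀ x, ∑ y, R x y = 0)
    (q : S → ℝ) (hq : ∀ x, 0 < q x)
    (Rhat : S → S → ℝ)
    (hRhat_off : ∀ x y, y ≠ x → Rhat x y = R y x * q y / q x)
    (hRhat_diag : ∀ x, Rhat x x = -∑ y ∈ Finset.univ.filter (fun y => y ≠ x), Rhat x y) :
    ∀ x, ∑ y, q y * (R y x + Rhat y x) = 0 := by
  intro x
  -- Detailed balance for `R + Rhat`: the flux from `y` to `x` equals the flux from `x` to `y`.
  have hbal : ∀ y, q y * (R y x + Rhat y x) = q x * (R x y + Rhat x y) := by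
    intro y
    rcases eq_or_ne y x with rfl | h
    · rfl
    · rw [hRhat_off x y h, hRhat_off y x h.symm]
      have := (hq x).ne'
      have := (hq y).ne'
      field_simp
      ring
  have hrow : ∑ y, Rhat x y = 0 := by
    rw [← Finset.sum_filter_add_sum_filter_not Finset.univ (fun y => y ≠ x),
      ← neg_eq_iff_add_eq_zero, ← hRhat_diag]
    simp [Finset.filter_eq']
  simp_rw [hbal]
  rw [← Finset.mul_sum, Finset.sum_add_distrib, hR, hrow, add_zero, mul_zero]
end

section
/- Let S be a finite state space, let R : ℝ → S × S → ℝ be a time-dependent rate matrix (every row of R_t sums to zero for each t), and let q : ℝ → S → ℝ be strictly positive and satisfy the Kolmogorov forward equation: for all t and x, the function s ↦ q_s(x) is differentiable at t with derivative ∑_y q_t(y) · R_t(y, x). Define the reverse rate matrix R̂_t by R̂_t(x, x̃) = R_t(x̃, x) · q_t(x̃) / q_t(x) for x̃ ≠ x and R̂_t(x, x) = −∑_{x̃ ≠ x} R̂_t(x, x̃). Then for any T ∈ ℝ, the time-reversed marginals satisfy the Kolmogorov forward equation with rate R̂: for all t and x, the function s ↦ q_{T−s}(x) is differentiable at t with derivative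 ∑_y q_{T−t}(y) · R̂_{T−t}(y, x). -/
/-!
Reversing time flips the sign of the derivative, so the claim reduces to the pointwise identity
`∑ y, q y * Rhat y x = -∑ y, q y * R y x`. Off the diagonal `q y * Rhat y x = R x y * q x`, and
since the row of `R` at `x` sums to zero, these terms add up to `-(q x * R x x)`. The diagonal
term `q x * Rhat x x` is `-∑ y ≠ x, q y * R y x` by definition of the reverse rate matrix.
-/

/-- if `q_t` is strictly positive and satisfies the Kolmogorov forward
equation for the time-dependent rate matrix `R_t`, and `Rhat_t` is the reverse rate matrix
(`Rhat_t(x,y) = R_t(y,x)·q_t(y)/q_t(x)` off-diagonal, diagonal = minus the off-diagonal row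
sum), then for any `T`, the time-reversed marginals `s ↦ q_{T-s}` satisfy the Kolmogorov
forward equation with rate `Rhat_{T-t}`. -/
theorem time_reversal_kolmogorov {S : Type*} [Fintype S] [DecidableEq S]
    (R : ℝ → S → S → ℝ) (hR : ∀ t x, ∑ y, R t x y = 0)
    (q : ℝ → S → ℝ) (hq : ∀ t x, 0 < q t x)
    (hfwd : ∀ t x, HasDerivAt (fun s => q s x) (∑ y, q t y * R t y x) t)
    (Rhat : ℝ → S → S → ℝ)
    (hRhat_off : ∀ t x y, y ≠ x → Rhat t x y = R t y x * q t y / q t x)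
    (hRhat_diag : ∀ t x,
      Rhat t x x = -∑ y ∈ Finset.univ.filter (fun y => y ≠ x), Rhat t x y) :
    ∀ (T t : ℝ) (x : S),
      HasDerivAt (fun s => q (T - s) x) (∑ y, q (T - t) y * Rhat (T - t) y x) t := by
  intro T t x
  set u := T - t with hu
  have off_diag : ∑ y ∈ Finset.univ.erase x, q u y * Rhat u y x = -(q u x * R u x x) := by
    have hrow := Finset.add_sum_erase Finset.univ (R u x) (Finset.mem_univ x)
    rw [hR u x] at hrow
    have hterm : ∑ y ∈ Finset.univ.erase x, q u y * Rhat u y x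
        = ∑ y ∈ Finset.univ.erase x, q u x * R u x y := by
      refine Finset.sum_congr rfl fun y hy => ?_
      rw [hRhat_off u y x (Finset.ne_of_mem_erase hy).symm]
      have := (hq u y).ne'
      field_simp
    rw [hterm, ← Finset.mul_sum]
    linear_combination q u x * hrow
  have diag : q u x * Rhat u x x = -∑ y ∈ Finset.univ.erase x, q u y * R u y x := by
    rw [hRhat_diag, Finset.filter_ne', mul_neg, Finset.mul_sum]
    congr 1
    refine Finset.sum_congr rfl fun y hy => ?_
    rw [hRhat_off u x y (Finset.ne_of_mem_erase hy)]
    have := (hq u x).ne'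
    field_simp
  have key : ∑ y, q u y * Rhat u y x = -∑ y, q u y * R u y x := by
    rw [← Finset.add_sum_erase Finset.univ (fun y => q u y * Rhat u y x) (Finset.mem_univ x),
      ← Finset.add_sum_erase Finset.univ (fun y => q u y * R u y x) (Finset.mem_univ x)]
    linear_combination off_diag + diag
  rw [key]
  exact (hfwd u x).comp_const_sub T t
end

section
/- Let S be a finite state space and D a positive integer. For each d ∈ {1, …, D} let q^d : ℝ → S × S → ℝ be a family of transition kernels satisfying the per-dimension Kolmogorov forward equation: for all t, i, j, the function s ↦ q^d_s(i, j) is differentiable at t with derivative ∑_{y ∈ S} q^d_t(i, y) · R^d_t(y, j), where R^d_t : S × S → ℝ. Define the product kernel Q_t(x̃, x) = ∏_{d=1}^D q^d_t(x̃_d, x_d) on S^D × S^D, and the factorized rate matrix R^{1:D}_t(x̃, x) = ∑_{d=1}^D R^d_t(x̃_d, x_d) · δ(x̃_{1:D∖d} = x_{1:D∖d}), where δ(x̃_{1:D∖d} = x_{1:D∖d}) equals 1 if x̃ and x agree in all coordinates except possibly d and 0 otherwise. Then Q satisfies the Kolmogorov forward equation with rate R^{1:D}: for all t, x̃, x, the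 function s ↦ Q_s(x̃, x) is differentiable at t with derivative ∑_{y ∈ S^D} Q_t(x̃, y) · R^{1:D}_t(y, x). -/
/-! By the product rule, the derivative of the product kernel is a sum over coordinates `d` of
`∏_{e ≠ d} q^e * ∑_z q^d(·, z) R^d(z, x_d)`. On the other side, the `d`-th summand of the
factorized rate is supported on the states `y = Function.update x d z`, so the sum over `y`
collapses to the same sum over `z : S` (`sum_factorized_summand`). -/

/-- The action of the `d`-th summand of the factorized rate matrix on a product: only the states
`Function.update x d z` contribute. -/
theorem sum_factorized_summand {S : Type*} {D : ℕ} [Fintype S]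
    [DecidableEq S] (p : Fin D → S → ℝ) (r : S → ℝ) (x : Fin D → S) (d : Fin D) :
    ∑ y : Fin D → S, (∏ e, p e (y e)) * (r (y d) * (if ∀ e, e ≠ d → y e = x e then 1 else 0)) =
      (∏ e ∈ Finset.univ.erase d, p e (x e)) * ∑ z, p d z * r z := by
  rw [Finset.mul_sum]
  symm
  refine Finset.sum_of_injOn (Function.update x d) ?_ ?_ ?_ ?_
  · exact (Function.update_injective x d).injOn
  · simp
  · intro y _ hy
    rw [if_neg, mul_zero, mul_zero]
    intro h
    refine hy ⟨y d, by simp, ?_⟩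
    funext e
    by_cases he : e = d
    · subst he; simp
    · simp [he, h e he]
  · intro z _
    have hz : ∀ e, e ≠ d → Function.update x d z e = x e := fun e he => by simp [he]
    rw [if_pos hz, ← Finset.mul_prod_erase Finset.univ _ (Finset.mem_univ d),
      Finset.prod_congr rfl (fun e he => by rw [hz e (Finset.ne_of_mem_erase he)] :
        ∀ e ∈ Finset.univ.erase d, p e (Function.update x d z e) = p e (x e))]
    simp only [Function.update_self]
    ring

/-- if each per-dimension transition kernel `q^d` satisfies the Kolmogorov
forward equation with rate `R^d_t`, then the product kernel
`Q_t(xt, x) = ∏_d q^d_t(xt_d, x_d)` satisfies the Kolmogorov forward equation with the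
factorized rate matrix
`R^{1:D}_t(y, x) = ∑_d R^d_t(y_d, x_d) · δ(y_{1:D∖d} = x_{1:D∖d})`. -/
theorem product_kernel_kolmogorov {S : Type*} [Fintype S] [DecidableEq S]
    {D : ℕ} (hD : 0 < D)
    (q : Fin D → ℝ → S → S → ℝ) (R : Fin D → ℝ → S → S → ℝ)
    (hfwd : ∀ d t i j, HasDerivAt (fun s => q d s i j) (∑ y, q d t i y * R d t y j) t)
    (t : ℝ) (xt x : Fin D → S) :
    HasDerivAt (fun s => ∏ d, q d s (xt d) (x d))
      (∑ y : Fin D → S, (∏ d, q d t (xt d) (y d)) *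
        (∑ d, R d t (y d) (x d) * (if ∀ e, e ≠ d → y e = x e then 1 else 0))) t := by
  have h := HasDerivAt.fun_finsetProd (u := Finset.univ)
    (fun d _ => hfwd d t (xt d) (x d))
  refine h.congr_deriv (Eq.symm ?_)
  simp_rw [Finset.mul_sum _ _ (∏ d, q d t (xt d) _)]
  rw [Finset.sum_comm]
  refine Finset.sum_congr rfl fun d _ => ?_
  exact sum_factorized_summand (fun e => q e t (xt e)) (fun z => R d t z (x d)) x d
end

section
/- Let S be a finite state space and D a positive integer. For each d let R^d : S × S → ℝ and let k^d : S × S → ℝ be strictly positive (k^d(x_d | x₀_d) the per-dimension conditional kernel). Let p : S^D → ℝ be nonnegative with ∑_{x₀} p(x₀) = 1, and define kₜ(x | x₀) = ∏_{d=1}^D k^d(x_d | x₀_d), the marginal q(x) = ∑_{x₀ ∈ S^D} p(x₀) · kₜ(x | x₀) (strictly positive), and the single-coordinate denoising distribution q₀(x₀_d | x) = (∑_{x₀ : coordinate d equals x₀_d} p(x₀) · kₜ(x | x₀)) / q(x). Then for all x, x̃ ∈ S^D: R^{1:D}(x̃, x) · q(x̃) / q(x) = ∑_{d=1}^D R^d(x̃_d,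 x_d) · δ(x̃_{1:D∖d} = x_{1:D∖d}) · ∑_{x₀_d ∈ S} q₀(x₀_d | x) · k^d(x̃_d | x₀_d) / k^d(x_d | x₀_d), where R^{1:D} is the factorized rate matrix built from the R^d. -/
/-!
The identity holds term by term in `d`. If `xt` and `x` differ off coordinate `d`, both terms
vanish. Otherwise `kernel_change_coord` gives `kt(xt|x₀) = kt(x|x₀) · k^d(xt_d|x₀_d) / k^d(x_d|x₀_d)`,
and averaging over `x₀`, grouped by the value `a = x₀_d`, turns `q(xt)/q(x)` into
`∑_a q₀(a|x) k^d(xt_d|a) / k^d(x_d|a)`.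
-/

/-- If `xt` and `x` agree off coordinate `d`, their forward kernels differ only in the `d`-th
factor, so passing from `x` to `xt` multiplies by the ratio of those factors. -/
lemma kernel_change_coord {S : Type*} {D : ℕ} (k : Fin D → S → S → ℝ)
    (hk : ∀ d b a, 0 < k d b a) (xt x x₀ : Fin D → S) (d : Fin D)
    (h : ∀ e, e ≠ d → xt e = x e) :
    ∏ e, k e (xt e) (x₀ e) =
      (∏ e, k e (x e) (x₀ e)) * (k d (xt d) (x₀ d) / k d (x d) (x₀ d)) := by
  have hoff : ∏ e ∈ Finset.univ.erase d, k e (xt e) (x₀ e) =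
      ∏ e ∈ Finset.univ.erase d, k e (x e) (x₀ e) :=
    Finset.prod_congr rfl fun e he => by rw [h e (Finset.ne_of_mem_erase he)]
  rw [← Finset.mul_prod_erase Finset.univ (fun e => k e (xt e) (x₀ e)) (Finset.mem_univ d),
    ← Finset.mul_prod_erase Finset.univ (fun e => k e (x e) (x₀ e)) (Finset.mem_univ d), hoff]
  have := (hk d (x d) (x₀ d)).ne'
  field_simp

/-- with a factorized forward kernel `kt(x|x₀) = ∏_d k^d(x_d|x₀_d)`,
marginal `q(x) = ∑_{x₀} p(x₀) kt(x|x₀)`, and single-coordinate denoising distribution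
`q₀(a|x) = (∑_{x₀ : x₀_d = a} p(x₀) kt(x|x₀)) / q(x)`, the two forms of the reverse rate
agree:
`R^{1:D}(xt, x) · q(xt)/q(x)
  = ∑_d R^d(xt_d, x_d) δ(xt_{1:D∖d} = x_{1:D∖d}) ∑_a q₀(a|x) k^d(xt_d|a)/k^d(x_d|a)`.
Here `k d b a` denotes `k^d(b | a)`. -/
theorem factorized_reverse_rate {S : Type*} [Fintype S] [DecidableEq S]
    {D : ℕ} (hD : 0 < D)
    (R : Fin D → S → S → ℝ)
    (k : Fin D → S → S → ℝ) (hk : ∀ d b a, 0 < k d b a)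
    (p : (Fin D → S) → ℝ) (hp : ∀ x₀, 0 ≤ p x₀) (hpsum : ∑ x₀, p x₀ = 1)
    (xt x : Fin D → S) :
    (∑ d, R d (xt d) (x d) * (if ∀ e, e ≠ d → xt e = x e then 1 else 0)) *
        (∑ x₀, p x₀ * ∏ d, k d (xt d) (x₀ d)) / (∑ x₀, p x₀ * ∏ d, k d (x d) (x₀ d)) =
      ∑ d, R d (xt d) (x d) * (if ∀ e, e ≠ d → xt e = x e then 1 else 0) *
        ∑ a : S,
          ((∑ x₀ ∈ Finset.univ.filter (fun x₀ => x₀ d = a), p x₀ * ∏ e, k e (x e) (x₀ e)) /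
              (∑ x₀, p x₀ * ∏ e, k e (x e) (x₀ e))) *
            (k d (xt d) a / k d (x d) a) := by
  rw [mul_div_assoc, Finset.sum_mul]
  refine Finset.sum_congr rfl fun d _ => ?_
  by_cases h : ∀ e, e ≠ d → xt e = x e
  · congr 1
    -- Both sides carry the same denominator `q(x)`, so it suffices to compare numerators.
    simp_rw [div_mul_eq_mul_div]
    rw [← Finset.sum_div]
    congr 1
    -- The sum over `a` and over the `x₀` with `x₀ d = a` is the sum over all `x₀`.
    rw [← Finset.sum_fiberwise Finset.univ (fun x₀ : Fin D → S => x₀ d)]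
    refine Finset.sum_congr rfl fun a _ => ?_
    rw [Finset.sum_mul]
    refine Finset.sum_congr rfl fun x₀ hx₀ => ?_
    rw [kernel_change_coord k hk xt x x₀ d h, (Finset.mem_filter.mp hx₀).2, mul_assoc]
  · simp [h]
end

section
/- Let S be a finite state space, D a positive integer, and R : S × S → ℝ a rate matrix (rows summing to zero). Suppose π : S → ℝ is a stationary distribution for R, i.e. ∑_{y ∈ S} π(y) · R(y, x) = 0 for all x ∈ S. Define the product distribution π^D(x) = ∏_{d=1}^D π(x_d) on S^D and the factorized rate matrix R^{1:D}(y, x) = ∑_{d=1}^D R(y_d, x_d) · δ(y_{1:D∖d} = x_{1:D∖d}). Then π^D is stationary for R^{1:D}: ∑_{y ∈ S^D} π^D(y) · R^{1:D}(y, x) = 0 for all x ∈ S^D. -/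
/-!
Stationarity is linear in the rate matrix, so it suffices to treat each dimension `d` separately.
The `d`-th summand `π^D(y) · R(y_d, x_d) · δ(y_{∖d} = x_{∖d})` is a product over coordinates `e` of
functions of `y_e` alone, so its sum over `y` is the product of the one-coordinate sums. The factor
for `e = d` is `∑ s, π s * R s (x d)`, which vanishes by stationarity of `π`.
-/

/-- if `π` is a stationary distribution for the rate matrix `R` on `S`, then
the product distribution `π^D(x) = ∏_d π(x_d)` is stationary for the factorized rate matrix
`R^{1:D}(y, x) = ∑_d R(y_d, x_d) · δ(y_{1:D∖d} = x_{1:D∖d})` on `S^D`. -/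
theorem product_distribution_stationary {S : Type*} [Fintype S] [DecidableEq S]
    {D : ℕ} (hD : 0 < D)
    (R : S → S → ℝ) (hR : ∀ x, ∑ y, R x y = 0)
    (π : S → ℝ) (hπ0 : ∀ z, 0 ≤ π z) (hπ1 : ∑ z, π z = 1)
    (hπ : ∀ x, ∑ y, π y * R y x = 0) :
    ∀ x : Fin D → S,
      ∑ y : Fin D → S, (∏ d, π (y d)) *
        (∑ d, R (y d) (x d) * (if ∀ e, e ≠ d → y e = x e then 1 else 0)) = 0 := by
  intro x
  simp_rw [Finset.mul_sum]
  rw [Finset.sum_comm]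
  refine Finset.sum_eq_zero fun d _ => ?_
  -- `h e` is the factor of `R(y_d, x_d) · δ(y_{∖d} = x_{∖d})` that depends on coordinate `e`.
  let h : Fin D → S → ℝ := fun e s => if e = d then R s (x d) else if s = x e then 1 else 0
  have hprod : ∀ y : Fin D → S,
      R (y d) (x d) * (if ∀ e, e ≠ d → y e = x e then 1 else 0) = ∏ e, h e (y e) := by
    intro y
    rw [← Finset.mul_prod_erase Finset.univ _ (Finset.mem_univ d)]
    congr 1
    · simp [h]
    · have hcongr : ∏ e ∈ Finset.univ.erase d, h e (y e)
          = ∏ e ∈ Finset.univ.erase d, if y e = x e then (1 : ℝ) else 0 :=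
        Finset.prod_congr rfl fun e he => if_neg (Finset.ne_of_mem_erase he)
      rw [hcongr, Finset.prod_ite_zero]
      simp
  simp_rw [hprod, ← Finset.prod_mul_distrib]
  rw [← Fintype.prod_sum fun e s => π s * h e s]
  exact Finset.prod_eq_zero (Finset.mem_univ d) (by simpa [h] using hπ (x d))
end
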